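/- arXiv:2407.05028 — 2 statements merged into one kernel-verified Lean document; each statement's English description precedes it below -/
import Mathlib

section
/- Let s and e be composable labelled transition systems with s mutually accepts e, and let σ ∈ (L_{s∥e}^δ)*. Then σ ∈ Utraces(s ∥ e) if and only if σ↾L_s^δ ∈ Utraces(s) and σ↾L_e^δ ∈ Utraces(e). -/
/-- Labels extended with the quiescence label `δ`. -/
inductive ELabel (Lab : Type) : Type
  | lab : Lab → ELabel Lab
  | delta : ELabel Lab

namespace ELabel

/-- Membership of an extended label in `𝓛^δ = 𝓛 ∪ {δ}`. -/
def inL {Lab : Type} (Ls : Set Lab) : ELabel Lab → Prop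
  | lab ℓ => ℓ ∈ Ls
  | delta => True

end ELabel

/-- A trace lies in `(𝓛^δ)*`. -/
def TraceIn {Lab : Type} (Ls : Set Lab) (σ : List (ELabel Lab)) : Prop :=
  ∀ x ∈ σ, ELabel.inL Ls x

/-- A labelled transition system.  `T q none q'` is an internal `τ`-step,
`T q (some ℓ) q'` is a step labelled `ℓ`. -/
structure LTS (Q : Type) (Lab : Type) where
  I : Set Lab
  U : Set Lab
  T : Q → Option Lab → Q → Prop
  q0 : Q

namespace LTS

variable {Q Lab : Type}

/-- The label set `L = I ∪ U`. -/
def L (M : LTS Q Lab) : Set Lab := M.I ∪ M.U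

/-- Standing assumptions on all LTSs: countable, disjoint input/output label
sets, transitions labelled within `L`, strong convergence (no infinite
`τ`-sequences), and image-finiteness. -/
def WellFormed (M : LTS Q Lab) : Prop :=
  M.I.Countable ∧ M.U.Countable ∧ Disjoint M.I M.U ∧
  (∀ q ℓ q', M.T q (some ℓ) q' → ℓ ∈ M.L) ∧
  (¬ ∃ f : ℕ → Q, ∀ n, M.T (f n) none (f (n + 1))) ∧
  (∀ q a, {q' | M.T q a q'}.Finite)

/-- A state is quiescent if neither an output nor `τ` is enabled in it. -/
def Quiescent (M : LTS Q Lab) (q : Q) : Prop :=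
  (∀ x ∈ M.U, ∀ q', ¬ M.T q (some x) q') ∧ ∀ q', ¬ M.T q none q'

/-- A single visible step `q --x--> q'` for `x ∈ L^δ`, where the quiescence
label `δ` gives a self-loop at quiescent states. -/
def VStep (M : LTS Q Lab) (q : Q) : ELabel Lab → Q → Prop
  | .lab ℓ, q' => M.T q (some ℓ) q'
  | .delta, q' => q' = q ∧ M.Quiescent q

/-- Zero or more `τ`-steps: `q ==ε==> q'`. -/
def Eps (M : LTS Q Lab) : Q → Q → Prop :=
  Relation.ReflTransGen fun a b => M.T a none b

/-- Weak transition `q ==σ==> q'` for `σ ∈ (L^δ)*`. -/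
inductive W (M : LTS Q Lab) : Q → List (ELabel Lab) → Q → Prop
  | nil {q q' : Q} : M.Eps q q' → W M q [] q'
  | snoc {q q1 q2 q' : Q} {σ : List (ELabel Lab)} {x : ELabel Lab} :
      W M q σ q1 → M.VStep q1 x q2 → M.Eps q2 q' → W M q (σ ++ [x]) q'

/-- `X after σ`, for a set of states `X`. -/
def afterSet (M : LTS Q Lab) (X : Set Q) (σ : List (ELabel Lab)) : Set Q :=
  {q' | ∃ q ∈ X, M.W q σ q'}

/-- `M after σ`, from the initial state. -/
def after (M : LTS Q Lab) (σ : List (ELabel Lab)) : Set Q :=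
  {q' | M.W M.q0 σ q'}

/-- The predicate underlying `out(q) ⊆ U ∪ {δ}`. -/
def outLabel (M : LTS Q Lab) (q : Q) : ELabel Lab → Prop
  | .lab ℓ => ℓ ∈ M.U ∧ ∃ q', M.T q (some ℓ) q'
  | .delta => M.Quiescent q

/-- `out(q)`. -/
def outq (M : LTS Q Lab) (q : Q) : Set (ELabel Lab) :=
  {x | M.outLabel q x}

/-- `in(q) = {ℓ ∈ I | q ==ℓ==>}`. -/
def inq (M : LTS Q Lab) (q : Q) : Set Lab :=
  {ℓ | ℓ ∈ M.I ∧ ∃ q', M.W q [ELabel.lab ℓ] q'}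

/-- `out(X) = ⋃_{q ∈ X} out(q)`. -/
def outSet (M : LTS Q Lab) (X : Set Q) : Set (ELabel Lab) :=
  ⋃ q ∈ X, M.outq q

/-- `in(X) = ⋂_{q ∈ X} in(q)`. -/
def inSet (M : LTS Q Lab) (X : Set Q) : Set Lab :=
  ⋂ q ∈ X, M.inq q

/-- Input-enabledness: `M` is an IOTS. -/
def InputEnabled (M : LTS Q Lab) : Prop :=
  ∀ q, ∀ ℓ ∈ M.I, ∃ q', M.W q [ELabel.lab ℓ] q'

/-- `Utraces(M)`. -/
def Utraces (M : LTS Q Lab) : Set (List (ELabel Lab)) :=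
  {σ | TraceIn M.L σ ∧ (∃ q', M.W M.q0 σ q') ∧
    ∀ σ1 ℓ σ2, σ = σ1 ++ ELabel.lab ℓ :: σ2 → ℓ ∈ M.I →
      ∀ q, M.W M.q0 σ1 q → ∃ q', M.W q [ELabel.lab ℓ] q'}

/-- An LTS is utrace-closed when every trace over `(L^δ)*` that it can
perform is a utrace. -/
def UtraceClosed (M : LTS Q Lab) : Prop :=
  ∀ σ : List (ELabel Lab), TraceIn M.L σ → (∃ q', M.W M.q0 σ q') → σ ∈ M.Utraces

end LTS

/-- `i uioco s`. -/
def Uioco {Qi Qs Lab : Type} (i : LTS Qi Lab) (s : LTS Qs Lab) : Prop :=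
  ∀ σ ∈ s.Utraces, i.outSet (i.after σ) ⊆ s.outSet (s.after σ)

/-- Composability: disjoint output label sets. -/
def Composable {Qs Qe Lab : Type} (s : LTS Qs Lab) (e : LTS Qe Lab) : Prop :=
  s.U ∩ e.U = ∅

/-- Parallel composition `s ∥ e`. -/
def par {Qs Qe Lab : Type} (s : LTS Qs Lab) (e : LTS Qe Lab) : LTS (Qs × Qe) Lab where
  I := (s.I \ e.U) ∪ (e.I \ s.U)
  U := s.U ∪ e.U
  T := fun p a p' =>
    match a with
    | none =>
        (s.T p.1 none p'.1 ∧ p'.2 = p.2) ∨ (e.T p.2 none p'.2 ∧ p'.1 = p.1)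
    | some ℓ =>
        (ℓ ∈ s.L ∧ ℓ ∉ e.L ∧ s.T p.1 (some ℓ) p'.1 ∧ p'.2 = p.2) ∨
        (ℓ ∈ e.L ∧ ℓ ∉ s.L ∧ e.T p.2 (some ℓ) p'.2 ∧ p'.1 = p.1) ∨
        (ℓ ∈ s.L ∧ ℓ ∈ e.L ∧ s.T p.1 (some ℓ) p'.1 ∧ e.T p.2 (some ℓ) p'.2)
  q0 := (s.q0, e.q0)

/-- `s accepts e`: along utraces of `s ∥ e`, every output of `e` that is an
input of `s` is (weakly) enabled in `s`. -/
def Accepts {Qs Qe Lab : Type} (s : LTS Qs Lab) (e : LTS Qe Lab) : Prop :=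
  ∀ σ ∈ (par s e).Utraces, ∀ qs qe, (par s e).W (par s e).q0 σ (qs, qe) →
    ∀ ℓ, ELabel.lab ℓ ∈ e.outq qe → ℓ ∈ s.I → ℓ ∈ s.inq qs

/-- `s mutually accepts e`. -/
def MutuallyAccepts {Qs Qe Lab : Type} (s : LTS Qs Lab) (e : LTS Qe Lab) : Prop :=
  Accepts s e ∧ Accepts e s

/-- `R` is an ecosim for `s` and `e`. -/
def IsEcosim {Qs Qe Lab : Type} (s : LTS Qs Lab) (e : LTS Qe Lab)
    (R : Set (Set Qs × Set Qe)) : Prop :=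
  (s.after [], e.after []) ∈ R ∧
  ∀ Xs Xe, (Xs, Xe) ∈ R →
    (∀ ℓ, ELabel.lab ℓ ∈ e.outSet Xe → ℓ ∈ s.I →
      ℓ ∈ s.inSet Xs ∧
        (s.afterSet Xs [ELabel.lab ℓ], e.afterSet Xe [ELabel.lab ℓ]) ∈ R) ∧
    (∀ ℓ, ELabel.lab ℓ ∈ s.outSet Xs → ℓ ∈ e.I →
      ℓ ∈ e.inSet Xe ∧
        (s.afterSet Xs [ELabel.lab ℓ], e.afterSet Xe [ELabel.lab ℓ]) ∈ R) ∧
    (∀ ℓ, (ELabel.lab ℓ ∈ e.outSet Xe ∨ ℓ ∈ e.inSet Xe) → ℓ ∉ s.L →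
      (Xs, e.afterSet Xe [ELabel.lab ℓ]) ∈ R) ∧
    (∀ ℓ, (ELabel.lab ℓ ∈ s.outSet Xs ∨ ℓ ∈ s.inSet Xs) → ℓ ∉ e.L →
      (s.afterSet Xs [ELabel.lab ℓ], Xe) ∈ R) ∧
    (∀ ℓ, ℓ ∈ s.inSet Xs → ℓ ∈ e.inSet Xe →
      (s.afterSet Xs [ELabel.lab ℓ], e.afterSet Xe [ELabel.lab ℓ]) ∈ R) ∧
    (ELabel.delta ∈ s.outSet Xs → ELabel.delta ∈ e.outSet Xe →
      (s.afterSet Xs [ELabel.delta], e.afterSet Xe [ELabel.delta]) ∈ R)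

/-- `s eco e`: there exists an ecosim for `s` and `e`. -/
def Eco {Qs Qe Lab : Type} (s : LTS Qs Lab) (e : LTS Qe Lab) : Prop :=
  ∃ R, IsEcosim s e R

/-- `R_U(s,e)`: the smallest relation closed under the given rules. -/
inductive RU {Qs Qe Lab : Type} (s : LTS Qs Lab) (e : LTS Qe Lab) :
    Set Qs → Set Qe → Prop
  | base : RU s e (s.after []) (e.after [])
  | syncOutE {Xs : Set Qs} {Xe : Set Qe} (ℓ : Lab) :
      RU s e Xs Xe → ELabel.lab ℓ ∈ e.outSet Xe → ℓ ∈ s.I →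
      RU s e (s.afterSet Xs [ELabel.lab ℓ]) (e.afterSet Xe [ELabel.lab ℓ])
  | syncOutS {Xs : Set Qs} {Xe : Set Qe} (ℓ : Lab) :
      RU s e Xs Xe → ELabel.lab ℓ ∈ s.outSet Xs → ℓ ∈ e.I →
      RU s e (s.afterSet Xs [ELabel.lab ℓ]) (e.afterSet Xe [ELabel.lab ℓ])
  | internalE {Xs : Set Qs} {Xe : Set Qe} (ℓ : Lab) :
      RU s e Xs Xe → (ELabel.lab ℓ ∈ e.outSet Xe ∨ ℓ ∈ e.inSet Xe) → ℓ ∉ s.L →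
      RU s e Xs (e.afterSet Xe [ELabel.lab ℓ])
  | internalS {Xs : Set Qs} {Xe : Set Qe} (ℓ : Lab) :
      RU s e Xs Xe → (ELabel.lab ℓ ∈ s.outSet Xs ∨ ℓ ∈ s.inSet Xs) → ℓ ∉ e.L →
      RU s e (s.afterSet Xs [ELabel.lab ℓ]) Xe
  | syncIn {Xs : Set Qs} {Xe : Set Qe} (ℓ : Lab) :
      RU s e Xs Xe → ℓ ∈ s.inSet Xs → ℓ ∈ e.inSet Xe →
      RU s e (s.afterSet Xs [ELabel.lab ℓ]) (e.afterSet Xe [ELabel.lab ℓ])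
  | qdelta {Xs : Set Qs} {Xe : Set Qe} :
      RU s e Xs Xe → ELabel.delta ∈ s.outSet Xs → ELabel.delta ∈ e.outSet Xe →
      RU s e (s.afterSet Xs [ELabel.delta]) (e.afterSet Xe [ELabel.delta])

open Classical in
/-- Projection `σ↾𝓛^δ` of a trace onto an (extended) label set: keeps `δ`
and the labels in `Ls`, removes all other labels. -/
noncomputable def projD {Lab : Type} (σ : List (ELabel Lab)) (Ls : Set Lab) :
    List (ELabel Lab) :=
  σ.filter fun x => decide (ELabel.inL Ls x)

open Classical in
/-- Projection `σ↾𝓛` of a trace of plain labels onto a label set. -/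
noncomputable def projL {Lab : Type} (σ : List Lab) (Ls : Set Lab) : List Lab :=
  σ.filter fun ℓ => decide (ℓ ∈ Ls)

open Classical in
/-- Substitution `σ[θ/δ]` of the label `θ` by the quiescence label `δ`. -/
noncomputable def substTheta {Lab : Type} (θ : Lab) (σ : List Lab) :
    List (ELabel Lab) :=
  σ.map fun ℓ => if ℓ = θ then ELabel.delta else ELabel.lab ℓ

/-- `⟨X⟩`: componentwise collection of a set of pairs of states. -/
def collect {Qs Qe : Type} (X : Set (Qs × Qe)) : Set Qs × Set Qe :=
  (Prod.fst '' X, Prod.snd '' X)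

/-- `q_s accepts q_e over σ`. -/
def AcceptsOver {Qs Qe Lab : Type} (s : LTS Qs Lab) (e : LTS Qe Lab)
    (qs : Qs) (qe : Qe) (σ : List (ELabel Lab)) : Prop :=
  ∀ σ1 σ2 : List (ELabel Lab), σ1 ++ σ2 = σ →
    ∀ (qs' : Qs) (qe' : Qe), (par s e).W (qs, qe) σ1 (qs', qe') →
      ∀ ℓ, ELabel.lab ℓ ∈ e.outq qe' → ℓ ∈ s.I → ℓ ∈ s.inq qs' ∧ ℓ ∈ e.U

/-- `q_s mutually accepts q_e over σ`. -/
def MutuallyAcceptsOver {Qs Qe Lab : Type} (s : LTS Qs Lab) (e : LTS Qe Lab)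
    (qs : Qs) (qe : Qe) (σ : List (ELabel Lab)) : Prop :=
  AcceptsOver s e qs qe σ ∧ AcceptsOver e s qe qs σ

/-- A test case: a quasi-finite tree-shaped LTS without `τ`-transitions, with
terminal states `pass` and `fail` carrying input self-loops, a special
quiescence-observation input `θ`, at most one output transition per state,
and receptive to all inputs other than `θ`. -/
structure TestCase (Qt Lab : Type) extends LTS Qt Lab where
  passS : Qt
  failS : Qt
  theta : Lab
  theta_input : theta ∈ I
  no_tau : ∀ q q', ¬ T q none q'
  tree : ∀ q, q ≠ q0 → q ≠ passS → q ≠ failS →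
    ∃! p : Qt × Option Lab, T p.1 p.2 q
  pass_loops : ∀ ℓ ∈ I, T passS (some ℓ) passS
  pass_terminal : ∀ a q', T passS a q' → q' = passS ∧ ∃ ℓ ∈ I, a = some ℓ
  fail_loops : ∀ ℓ ∈ I, T failS (some ℓ) failS
  fail_terminal : ∀ a q', T failS a q' → q' = failS ∧ ∃ ℓ ∈ I, a = some ℓ
  one_output : ∀ q ℓ ℓ' q' q'', ℓ ∈ U → ℓ' ∈ U →
    T q (some ℓ) q' → T q (some ℓ') q'' → ℓ = ℓ' ∧ q' = q''
  receptive : ∀ q, ∀ ℓ ∈ I, ℓ ≠ theta → ∃ q', T q (some ℓ) q'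

/-- Test execution `t ⫿ i` of a test case `t` with an implementation `i`. -/
def testExec {Qt Qi Lab : Type} (t : TestCase Qt Lab) (i : LTS Qi Lab) :
    LTS (Qt × Qi) Lab where
  I := ∅
  U := i.U ∪ (t.toLTS.L \ {t.theta})
  T := fun p a p' =>
    match a with
    | none => i.T p.2 none p'.2 ∧ p'.1 = p.1
    | some ℓ =>
        (ℓ ∈ i.L ∧ ℓ ∉ t.toLTS.L ∧ i.T p.2 (some ℓ) p'.2 ∧ p'.1 = p.1) ∨
        (ℓ ∈ t.toLTS.L ∧ ℓ ∉ i.L ∧ ℓ ≠ t.theta ∧ t.T p.1 (some ℓ) p'.1 ∧ p'.2 = p.2) ∨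
        (ℓ ∈ i.L ∧ ℓ ∈ t.toLTS.L ∧ t.T p.1 (some ℓ) p'.1 ∧ i.T p.2 (some ℓ) p'.2) ∨
        (ℓ = t.theta ∧ t.T p.1 (some ℓ) p'.1 ∧ p'.2 = p.2 ∧ i.Quiescent p.2)
  q0 := (t.q0, i.q0)


namespace LTS
variable {Q Lab : Type}

theorem W_nil_iff (M : LTS Q Lab) (q q' : Q) : M.W q [] q' ↔ M.Eps q q' := by
  constructor
  · intro h
    generalize hσ : ([] : List (ELabel Lab)) = σ at h
    cases h with
    | nil h => exact h
    | snoc => simp at hσ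
  · exact W.nil

theorem W_snoc_iff (M : LTS Q Lab) (q q' : Q) (σ : List (ELabel Lab)) (x : ELabel Lab) :
    M.W q (σ ++ [x]) q' ↔ ∃ q1 q2, M.W q σ q1 ∧ M.VStep q1 x q2 ∧ M.Eps q2 q' := by
  constructor
  · intro h
    generalize hσ : σ ++ [x] = ρ at h
    cases h with
    | nil h => simp at hσ
    | snoc h1 h2 h3 =>
      obtain ⟨rfl, h⟩ := List.append_inj' hσ rfl
      simp only [List.cons.injEq, and_true] at h
      subst h
      exact ⟨_, _, h1, h2, h3⟩
  · rintro ⟨q1, q2, h1, h2, h3⟩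
    exact W.snoc h1 h2 h3

theorem W_eps (M : LTS Q Lab) {q q1 q' : Q} {σ : List (ELabel Lab)}
    (h : M.W q σ q1) (h' : M.Eps q1 q') : M.W q σ q' := by
  cases h with
  | nil h => exact W.nil (h.trans h')
  | snoc h1 h2 h3 => exact W.snoc h1 h2 (h3.trans h')

theorem W_single_iff (M : LTS Q Lab) (q q' : Q) (x : ELabel Lab) :
    M.W q [x] q' ↔ ∃ q1 q2, M.Eps q q1 ∧ M.VStep q1 x q2 ∧ M.Eps q2 q' := by
  have := M.W_snoc_iff q q' [] x
  simpa [W_nil_iff] using this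

theorem eps_quiescent (M : LTS Q Lab) {q q' : Q} (h : M.Eps q q')
    (hq : ∀ q', ¬ M.T q none q') : q' = q := by
  rcases Relation.ReflTransGen.cases_head h with h | ⟨c, h, _⟩
  · exact h.symm
  · exact (hq _ h).elim

theorem utraces_snoc_iff (M : LTS Q Lab) (σ : List (ELabel Lab)) (x : ELabel Lab) :
    σ ++ [x] ∈ M.Utraces ↔ σ ∈ M.Utraces ∧ ELabel.inL M.L x ∧ (∃ q', M.W M.q0 (σ ++ [x]) q') ∧
      ∀ ℓ, x = .lab ℓ → ℓ ∈ M.I → ∀ q, M.W M.q0 σ q → ∃ q', M.W q [ELabel.lab ℓ] q' := by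
  constructor
  · rintro ⟨h1, h2, h3⟩
    refine ⟨⟨fun y hy => h1 y (by simp [hy]), ?_, ?_⟩, h1 x (by simp), h2, ?_⟩
    · obtain ⟨q', h⟩ := h2
      obtain ⟨q1, _, h, _⟩ := (M.W_snoc_iff _ _ _ _).1 h
      exact ⟨q1, h⟩
    · intro σ1 ℓ σ2 hs
      exact h3 σ1 ℓ (σ2 ++ [x]) (by simp [hs])
    · intro ℓ hx
      exact h3 σ ℓ [] (by simp [hx])
  · rintro ⟨⟨h1, h2, h3⟩, h4, h5, h6⟩
    refine ⟨?_, h5, ?_⟩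
    · intro y hy
      rcases List.mem_append.1 hy with hy | hy
      · exact h1 y hy
      · rw [List.mem_singleton.1 hy]; exact h4
    · intro σ1 ℓ σ2 hs
      rcases List.eq_nil_or_concat σ2 with rfl | ⟨σ3, y, rfl⟩
      · obtain ⟨rfl, h⟩ := List.append_inj' hs rfl
        simp only [List.cons.injEq, and_true] at h
        exact h6 ℓ h
      · have hs' : σ ++ [x] = (σ1 ++ ELabel.lab ℓ :: σ3) ++ [y] := by simpa using hs
        obtain ⟨h, _⟩ := List.append_inj' hs' rfl
        exact h3 σ1 ℓ σ3 h

theorem utraces_prefix (M : LTS Q Lab) (σ τ : List (ELabel Lab)) (h : σ ++ τ ∈ M.Utraces) :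
    σ ∈ M.Utraces := by
  induction τ using List.reverseRecOn with
  | nil => simpa using h
  | append_singleton τ x ih =>
    rw [← List.append_assoc, utraces_snoc_iff] at h
    exact ih h.1

end LTS

theorem projD_snoc_pos {Lab : Type} (σ : List (ELabel Lab)) (x : ELabel Lab) (Ls : Set Lab)
    (h : ELabel.inL Ls x) : projD (σ ++ [x]) Ls = projD σ Ls ++ [x] := by
  simp [projD, List.filter_append, h]

theorem projD_snoc_neg {Lab : Type} (σ : List (ELabel Lab)) (x : ELabel Lab) (Ls : Set Lab)
    (h : ¬ ELabel.inL Ls x) : projD (σ ++ [x]) Ls = projD σ Ls := by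
  simp [projD, List.filter_append, h]

section
variable {Qs Qe Lab : Type} (s : LTS Qs Lab) (e : LTS Qe Lab)

theorem par_eps_iff (p p' : Qs × Qe) :
    (par s e).Eps p p' ↔ s.Eps p.1 p'.1 ∧ e.Eps p.2 p'.2 := by
  constructor
  · intro h
    induction h with
    | refl => exact ⟨.refl, .refl⟩
    | tail _ h ih =>
      rcases h with ⟨h, h'⟩ | ⟨h, h'⟩
      · exact ⟨ih.1.tail h, h' ▸ ih.2⟩
      · exact ⟨h' ▸ ih.1, ih.2.tail h⟩
  · obtain ⟨a, b⟩ := p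
    obtain ⟨c, d⟩ := p'
    rintro ⟨h1, h2⟩
    have A : (par s e).Eps (a, b) (c, b) :=
      Relation.ReflTransGen.lift (fun q => (q, b)) (fun x y h => Or.inl ⟨h, rfl⟩) _ _ h1
    have B : (par s e).Eps (c, b) (c, d) :=
      Relation.ReflTransGen.lift (fun q => (c, q)) (fun x y h => Or.inr ⟨h, rfl⟩) _ _ h2
    exact A.trans B

theorem par_L : (par s e).L = s.L ∪ e.L := by
  ext x
  simp only [LTS.L, par, Set.mem_union, Set.mem_sdiff]
  tauto

theorem par_quiescent (hcomp : Composable s e) {a : Qs} {b : Qe}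
    (ha : s.Quiescent a) (hb : e.Quiescent b) : (par s e).Quiescent (a, b) := by
  refine ⟨?_, ?_⟩
  · rintro x hx ⟨c, d⟩ h
    have h1 := ha.1 x
    have h2 := hb.1 x
    have h3 : x ∈ s.U ∨ x ∈ e.U := hx
    rcases h with ⟨_, h, h', _⟩ | ⟨_, h, h', _⟩ | ⟨_, _, h', h''⟩
    · rcases h3 with h3 | h3
      · exact h1 h3 _ h'
      · exact h (Or.inr h3)
    · rcases h3 with h3 | h3
      · exact h (Or.inr h3)
      · exact h2 h3 _ h'
    · rcases h3 with h3 | h3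
      · exact h1 h3 _ h'
      · exact h2 h3 _ h''
  · rintro ⟨c, d⟩ (⟨h, _⟩ | ⟨h, _⟩)
    · exact ha.2 _ h
    · exact hb.2 _ h

theorem par_back (hcomp : Composable s e) (p : Qs) (p' : Qe) (σ : List (ELabel Lab))
    (hσ : TraceIn (par s e).L σ) (a : Qs) (b : Qe)
    (h1 : s.W p (projD σ s.L) a) (h2 : e.W p' (projD σ e.L) b) :
    (par s e).W (p, p') σ (a, b) := by
  induction σ using List.reverseRecOn generalizing a b with
  | nil =>
    rw [LTS.W_nil_iff, par_eps_iff]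
    simp only [projD, List.filter_nil, LTS.W_nil_iff] at h1 h2
    exact ⟨h1, h2⟩
  | append_singleton σ x ih =>
    have ih := ih (fun y hy => hσ y (by simp [hy]))
    have hx := hσ x (by simp)
    rw [LTS.W_snoc_iff]
    cases x with
    | delta =>
      rw [projD_snoc_pos _ .delta s.L trivial, LTS.W_snoc_iff] at h1
      rw [projD_snoc_pos _ .delta e.L trivial, LTS.W_snoc_iff] at h2
      obtain ⟨a1, a2, A1, ⟨rfl, A2⟩, A3⟩ := h1
      obtain ⟨b1, b2, B1, ⟨rfl, B2⟩, B3⟩ := h2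
      exact ⟨(a2, b2), (a2, b2), ih _ _ A1 B1, ⟨rfl, par_quiescent s e hcomp A2 B2⟩,
        (par_eps_iff s e _ _).2 ⟨A3, B3⟩⟩
    | lab ℓ =>
      have hx : ℓ ∈ s.L ∨ ℓ ∈ e.L := by
        have : ℓ ∈ (par s e).L := hx
        rwa [par_L] at this
      by_cases hS : ℓ ∈ s.L <;> by_cases hE : ℓ ∈ e.L
      · rw [projD_snoc_pos _ (.lab ℓ) s.L hS, LTS.W_snoc_iff] at h1
        rw [projD_snoc_pos _ (.lab ℓ) e.L hE, LTS.W_snoc_iff] at h2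
        obtain ⟨a1, a2, A1, A2, A3⟩ := h1
        obtain ⟨b1, b2, B1, B2, B3⟩ := h2
        exact ⟨(a1, b1), (a2, b2), ih _ _ A1 B1, Or.inr (Or.inr ⟨hS, hE, A2, B2⟩),
          (par_eps_iff s e _ _).2 ⟨A3, B3⟩⟩
      · rw [projD_snoc_pos _ (.lab ℓ) s.L hS, LTS.W_snoc_iff] at h1
        rw [projD_snoc_neg _ (.lab ℓ) e.L hE] at h2
        obtain ⟨a1, a2, A1, A2, A3⟩ := h1
        exact ⟨(a1, b), (a2, b), ih _ _ A1 h2, Or.inl ⟨hS, hE, A2, rfl⟩,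
          (par_eps_iff s e _ _).2 ⟨A3, .refl⟩⟩
      · rw [projD_snoc_neg _ (.lab ℓ) s.L hS] at h1
        rw [projD_snoc_pos _ (.lab ℓ) e.L hE, LTS.W_snoc_iff] at h2
        obtain ⟨b1, b2, B1, B2, B3⟩ := h2
        exact ⟨(a, b1), (a, b2), ih _ _ h1 B1, Or.inr (Or.inl ⟨hE, hS, B2, rfl⟩),
          (par_eps_iff s e _ _).2 ⟨.refl, B3⟩⟩
      · tauto

theorem par_fwd (p : Qs) (p' : Qe) (σ : List (ELabel Lab))
    (hq : ∀ σ1 σ2 a b, σ = σ1 ++ ELabel.delta :: σ2 → (par s e).W (p, p') σ1 (a, b) →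
      (par s e).Quiescent (a, b) → s.Quiescent a ∧ e.Quiescent b) (a : Qs) (b : Qe)
    (h : (par s e).W (p, p') σ (a, b)) :
    s.W p (projD σ s.L) a ∧ e.W p' (projD σ e.L) b := by
  induction σ using List.reverseRecOn generalizing a b with
  | nil =>
    rw [LTS.W_nil_iff, par_eps_iff] at h
    simp only [projD, List.filter_nil, LTS.W_nil_iff]
    exact h
  | append_singleton σ x ih =>
    have ih := ih (fun σ1 σ2 a b h => hq σ1 (σ2 ++ [x]) a b (by simp [h]))
    rw [LTS.W_snoc_iff] at h
    obtain ⟨⟨a1, b1⟩, ⟨a2, b2⟩, h1, h2, h3⟩ := h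
    obtain ⟨A1, B1⟩ := ih _ _ h1
    obtain ⟨A3, B3⟩ := (par_eps_iff s e _ _).1 h3
    simp only at A3 B3
    cases x with
    | delta =>
      rw [projD_snoc_pos _ .delta s.L trivial, projD_snoc_pos _ .delta e.L trivial]
      obtain ⟨h2, h4⟩ := h2
      obtain ⟨A2, B2⟩ := hq σ [] a1 b1 rfl h1 h4
      cases h2
      exact ⟨.snoc A1 ⟨rfl, A2⟩ A3, .snoc B1 ⟨rfl, B2⟩ B3⟩
    | lab ℓ =>
      rcases h2 with ⟨hS, hE, h2, h4⟩ | ⟨hE, hS, h2, h4⟩ | ⟨hS, hE, h2, h4⟩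
      · simp only at h4
        subst h4
        rw [projD_snoc_pos _ (.lab ℓ) s.L hS, projD_snoc_neg _ (.lab ℓ) e.L hE]
        exact ⟨.snoc A1 h2 A3, e.W_eps B1 B3⟩
      · simp only at h4
        subst h4
        rw [projD_snoc_neg _ (.lab ℓ) s.L hS, projD_snoc_pos _ (.lab ℓ) e.L hE]
        exact ⟨s.W_eps A1 A3, .snoc B1 h2 B3⟩
      · rw [projD_snoc_pos _ (.lab ℓ) s.L hS, projD_snoc_pos _ (.lab ℓ) e.L hE]
        exact ⟨.snoc A1 h2 A3, .snoc B1 h4 B3⟩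

/- symmetry -/
theorem par_T_swap (p p' : Qs × Qe) (a : Option Lab) :
    (par e s).T p.swap a p'.swap ↔ (par s e).T p a p' := by
  cases a <;> simp only [par, Prod.fst_swap, Prod.snd_swap] <;> tauto

theorem par_quiescent_swap (p : Qs × Qe) :
    (par e s).Quiescent p.swap ↔ (par s e).Quiescent p := by
  have h1 : (par e s).U = (par s e).U := Set.union_comm _ _
  simp only [LTS.Quiescent, h1]
  constructor
  · rintro ⟨h, h'⟩
    exact ⟨fun x hx q hq => h x hx q.swap ((par_T_swap s e _ _ _).2 hq),
      fun q hq => h' q.swap ((par_T_swap s e _ _ _).2 hq)⟩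
  · rintro ⟨h, h'⟩
    exact ⟨fun x hx q hq => h x hx q.swap ((par_T_swap s e _ _ _).1 (by simpa using hq)),
      fun q hq => h' q.swap ((par_T_swap s e _ _ _).1 (by simpa using hq))⟩

theorem par_W_swap (p p' : Qs × Qe) (σ : List (ELabel Lab)) (h : (par s e).W p σ p') :
    (par e s).W p.swap σ p'.swap := by
  have heps : ∀ p p' : Qs × Qe, (par s e).Eps p p' → (par e s).Eps p.swap p'.swap := by
    intro p p' h
    rw [par_eps_iff] at h ⊢
    exact ⟨h.2, h.1⟩
  induction h with
  | nil h => exact .nil (heps _ _ h)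
  | @snoc q1 q2 q' σ x _ h2 h3 ih =>
    refine .snoc ih ?_ (heps _ _ h3)
    cases x with
    | delta => exact ⟨by rw [h2.1], (par_quiescent_swap s e _).2 h2.2⟩
    | lab ℓ => exact (par_T_swap s e _ _ _).2 h2

theorem par_utraces_swap (σ : List (ELabel Lab)) (h : σ ∈ (par s e).Utraces) :
    σ ∈ (par e s).Utraces := by
  obtain ⟨h1, ⟨q, h2⟩, h3⟩ := h
  refine ⟨?_, ⟨q.swap, par_W_swap s e _ _ _ h2⟩, ?_⟩
  · rw [par_L, Set.union_comm, ← par_L]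
    exact h1
  · intro σ1 ℓ σ2 hs hI q hq
    have hI' : ℓ ∈ (par s e).I := Or.symm hI
    obtain ⟨r, hr⟩ := h3 σ1 ℓ σ2 hs hI' q.swap (par_W_swap e s _ _ _ hq)
    exact ⟨r.swap, par_W_swap s e _ _ _ hr⟩

theorem quiescent_left (hcomp : Composable s e)
    (hacc : Accepts e s) (σ : List (ELabel Lab)) (hσ : σ ∈ (par s e).Utraces)
    (a : Qs) (b : Qe) (h : (par s e).W (par s e).q0 σ (a, b))
    (hq : (par s e).Quiescent (a, b)) : s.Quiescent a := by
  refine ⟨fun x hx q' hT => ?_, fun q' hT => hq.2 (q', b) (Or.inl ⟨hT, rfl⟩)⟩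
  have hxe : x ∉ e.U := fun h' => by
    have : x ∈ s.U ∩ e.U := ⟨hx, h'⟩
    rw [hcomp] at this
    exact this
  by_cases hE : x ∈ e.L
  · have hI : x ∈ e.I := hE.resolve_right hxe
    obtain ⟨_, d, hd⟩ := hacc σ (par_utraces_swap s e σ hσ) b a (par_W_swap s e _ _ _ h) x
      ⟨hx, q', hT⟩ hI
    obtain ⟨b1, b2, h1, h2, _⟩ := (e.W_single_iff _ _ _).1 hd
    have := e.eps_quiescent h1 (fun c hc => hq.2 (a, c) (Or.inr ⟨hc, rfl⟩))
    subst this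
    exact hq.1 x (Or.inl hx) (q', b2) (Or.inr (Or.inr ⟨Or.inr hx, hE, hT, h2⟩))
  · exact hq.1 x (Or.inl hx) (q', b) (Or.inl ⟨Or.inr hx, hE, hT, rfl⟩)

theorem composable_symm (hcomp : Composable s e) : Composable e s := by
  unfold Composable at *
  rw [Set.inter_comm]; exact hcomp

theorem quiescent_both (hcomp : Composable s e)
    (hma : MutuallyAccepts s e) (σ : List (ELabel Lab)) (hσ : σ ∈ (par s e).Utraces)
    (a : Qs) (b : Qe) (h : (par s e).W (par s e).q0 σ (a, b))
    (hq : (par s e).Quiescent (a, b)) : s.Quiescent a ∧ e.Quiescent b :=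
  ⟨quiescent_left s e hcomp hma.2 σ hσ a b h hq,
    quiescent_left e s (composable_symm s e hcomp) hma.1 σ (par_utraces_swap s e σ hσ) b a
      (par_W_swap s e _ _ _ h) ((par_quiescent_swap s e _).2 hq)⟩

theorem fwd_utrace (hcomp : Composable s e) (hma : MutuallyAccepts s e)
    (σ : List (ELabel Lab)) (hσ : σ ∈ (par s e).Utraces) (a : Qs) (b : Qe)
    (h : (par s e).W (par s e).q0 σ (a, b)) :
    s.W s.q0 (projD σ s.L) a ∧ e.W e.q0 (projD σ e.L) b := by
  refine par_fwd s e _ _ σ ?_ a b h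
  intro σ1 σ2 a b hs
  exact quiescent_both s e hcomp hma σ1 (LTS.utraces_prefix _ _ _ (hs ▸ hσ)) a b

theorem fwd_single (ℓ : Lab) (hℓ : ℓ ∈ s.L) (p a : Qs) (p' b : Qe)
    (h : (par s e).W (p, p') [.lab ℓ] (a, b)) : s.W p [.lab ℓ] a := by
  have := (par_fwd s e p p' [.lab ℓ] ?_ a b h).1
  · simpa [projD, ELabel.inL, hℓ] using this
  · intro σ1 σ2 _ _ hs
    have : ELabel.delta ∈ [ELabel.lab ℓ] := by rw [hs]; simp
    simp at this

/-- the projection to the left component of a utrace is a utrace -/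
theorem left_utrace (hs : s.WellFormed) (hcomp : Composable s e) (hma : MutuallyAccepts s e)
    (σ : List (ELabel Lab)) (h : σ ∈ (par s e).Utraces) :
    projD σ s.L ∈ s.Utraces := by
  induction σ using List.reverseRecOn with
  | nil =>
    refine ⟨by simp [projD, TraceIn], ⟨s.q0, .nil .refl⟩, ?_⟩
    intro σ1 ℓ σ2 h
    simp [projD] at h
  | append_singleton σ x ih =>
    have h0 := h
    rw [LTS.utraces_snoc_iff] at h
    obtain ⟨hσ, hx, ⟨⟨a, b⟩, hr⟩, hin⟩ := h
    have ih := ih hσ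
    by_cases hS : ELabel.inL s.L x
    swap
    · rw [projD_snoc_neg _ _ _ hS]; exact ih
    have hf := (fwd_utrace s e hcomp hma _ h0 _ _ hr).1
    rw [projD_snoc_pos _ _ _ hS] at hf ⊢
    rw [LTS.utraces_snoc_iff]
    refine ⟨ih, hS, ⟨_, hf⟩, ?_⟩
    rintro ℓ rfl hI q hq
    obtain ⟨⟨a1, b1⟩, ⟨a2, b2⟩, h1, h2, h3⟩ := (LTS.W_snoc_iff _ _ _ _ _).1 hr
    have hB := (fwd_utrace s e hcomp hma _ hσ _ _ h1).2
    have hqb := par_back s e hcomp _ _ σ hσ.1 _ _ hq hB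
    by_cases hU : ℓ ∈ e.U
    · have hT : ∃ b', e.T b1 (some ℓ) b' := by
        rcases h2 with ⟨_, hE, _⟩ | ⟨_, hS', _⟩ | ⟨_, _, _, h2⟩
        · exact (hE (Or.inr hU)).elim
        · exact (hS' hS).elim
        · exact ⟨_, h2⟩
      exact (hma.1 σ hσ q b1 hqb ℓ ⟨hU, hT⟩ hI).2
    · obtain ⟨⟨c, d⟩, hc⟩ := hin ℓ rfl (Or.inl ⟨hI, hU⟩) _ hqb
      exact ⟨c, fwd_single s e ℓ hS _ _ _ _ hc⟩

theorem right_to_left (hs : s.WellFormed) (he : e.WellFormed)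
    (hcomp : Composable s e) (hma : MutuallyAccepts s e)
    (σ : List (ELabel Lab)) (hσ : TraceIn (par s e).L σ)
    (h1 : projD σ s.L ∈ s.Utraces) (h2 : projD σ e.L ∈ e.Utraces) :
    σ ∈ (par s e).Utraces := by
  induction σ using List.reverseRecOn with
  | nil =>
    refine ⟨by simp [TraceIn], ⟨_, .nil .refl⟩, ?_⟩
    intro σ1 ℓ σ2 h
    simp at h
  | append_singleton σ x ih =>
    have hσ' : TraceIn (par s e).L σ := fun y hy => hσ y (by simp [hy])
    have hp : ∀ {Q : Type} (M : LTS Q Lab), projD (σ ++ [x]) M.L ∈ M.Utraces →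
        projD σ M.L ∈ M.Utraces := by
      intro Q M h
      by_cases hx : ELabel.inL M.L x
      · rw [projD_snoc_pos _ _ _ hx, LTS.utraces_snoc_iff] at h
        exact h.1
      · rwa [projD_snoc_neg _ _ _ hx] at h
    have hu := ih hσ' (hp s h1) (hp e h2)
    have hi : ∀ {Q : Type} (M : LTS Q Lab), projD (σ ++ [x]) M.L ∈ M.Utraces →
        ∀ ℓ, x = .lab ℓ → (ℓ ∈ M.L → ℓ ∈ M.I) → ∀ q, M.W M.q0 (projD σ M.L) q →
          ∃ q', M.W q (projD [x] M.L) q' := by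
      rintro Q M h ℓ rfl hI q hq
      by_cases hx : ELabel.inL M.L (.lab ℓ)
      · rw [projD_snoc_pos _ _ _ hx, LTS.utraces_snoc_iff] at h
        have := h.2.2.2 ℓ rfl (hI hx) q hq
        simpa [projD, hx] using this
      · refine ⟨q, ?_⟩
        simpa [projD, hx] using LTS.W.nil .refl
    rw [LTS.utraces_snoc_iff]
    obtain ⟨a, ha⟩ := h1.2.1
    obtain ⟨b, hb⟩ := h2.2.1
    refine ⟨hu, hσ x (by simp), ⟨_, par_back s e hcomp _ _ _ hσ _ _ ha hb⟩, ?_⟩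
    rintro ℓ rfl hI ⟨q, r⟩ hqr
    obtain ⟨hq, hr⟩ := fwd_utrace s e hcomp hma _ hu _ _ hqr
    have hds : ℓ ∈ s.I → ℓ ∉ s.U := fun h h' => Set.disjoint_left.1 hs.2.2.1 h h'
    have hde : ℓ ∈ e.I → ℓ ∉ e.U := fun h h' => Set.disjoint_left.1 he.2.2.1 h h'
    have hI' : (ℓ ∈ s.I ∧ ℓ ∉ e.U) ∨ (ℓ ∈ e.I ∧ ℓ ∉ s.U) := hI
    obtain ⟨q', hq'⟩ := hi s h1 ℓ rfl (fun (h : ℓ ∈ s.I ∨ ℓ ∈ s.U) => by tauto) q hq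
    obtain ⟨r', hr'⟩ := hi e h2 ℓ rfl (fun (h : ℓ ∈ e.I ∨ ℓ ∈ e.U) => by tauto) r hr
    refine ⟨(q', r'), par_back s e hcomp _ _ _ ?_ _ _ hq' hr'⟩
    intro y hy
    rw [List.mem_singleton.1 hy]
    exact hσ _ (by simp)

end

/-- if `s` mutually accepts `e`, then `σ ∈ Utraces(s ∥ e)` iff
`σ↾L_s^δ ∈ Utraces(s)` and `σ↾L_e^δ ∈ Utraces(e)`. -/
theorem project_utraces {Qs Qe Lab : Type}
    (s : LTS Qs Lab) (e : LTS Qe Lab)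
    (hs : s.WellFormed) (he : e.WellFormed)
    (hcomp : Composable s e) (hma : MutuallyAccepts s e)
    (σ : List (ELabel Lab)) (hσ : TraceIn (par s e).L σ) :
    σ ∈ (par s e).Utraces ↔
      projD σ s.L ∈ s.Utraces ∧ projD σ e.L ∈ e.Utraces := by
  constructor
  · intro h
    exact ⟨left_utrace s e hs hcomp hma σ h,
      left_utrace e s he (composable_symm s e hcomp) ⟨hma.2, hma.1⟩ σ (par_utraces_swap s e σ h)⟩
  · rintro ⟨h1, h2⟩
    exact right_to_left s e hs he hcomp hma σ hσ h1 h2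
end

section
/- Let s be a labelled transition system and i_e an input-enabled transition system such that s and i_e are composable, and let σ ∈ (L_{s∥i_e}^δ)*. If σ↾L_s^δ ∈ Utraces(s) and σ↾L_{i_e}^δ ∈ Utraces(i_e), then σ ∈ Utraces(s ∥ i_e). -/
namespace CUI

variable {Q Qs Qe Lab : Type}

theorem W_nil {M : LTS Q Lab} {q q' : Q} (h : M.W q [] q') : M.Eps q q' := by
  generalize hσ : ([] : List (ELabel Lab)) = σ at h
  cases h with
  | nil h => exact h
  | snoc h1 h2 h3 => simp at hσ

theorem W_snoc {M : LTS Q Lab} {q q' : Q} {σ : List (ELabel Lab)} {x : ELabel Lab}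
    (h : M.W q (σ ++ [x]) q') :
    ∃ q1 q2, M.W q σ q1 ∧ M.VStep q1 x q2 ∧ M.Eps q2 q' := by
  generalize hτ : σ ++ [x] = τ at h
  cases h with
  | nil h => simp at hτ
  | snoc h1 h2 h3 =>
    obtain ⟨rfl, hx⟩ := List.append_inj' hτ rfl
    simp only [List.cons.injEq, and_true] at hx
    subst hx
    exact ⟨_, _, h1, h2, h3⟩

theorem W_eps {M : LTS Q Lab} {q q1 q' : Q} {σ : List (ELabel Lab)}
    (h : M.W q σ q1) (h' : M.Eps q1 q') : M.W q σ q' := by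
  cases h with
  | nil h => exact .nil (Relation.ReflTransGen.trans h h')
  | snoc h1 h2 h3 => exact .snoc h1 h2 (Relation.ReflTransGen.trans h3 h')

theorem eps_par {s : LTS Qs Lab} {e : LTS Qe Lab} {a a' : Qs} {b b' : Qe}
    (h1 : s.Eps a a') (h2 : e.Eps b b') : (par s e).Eps (a, b) (a', b') := by
  have h3 : (par s e).Eps (a, b) (a', b) := by
    induction h1 with
    | refl => exact .refl
    | tail _ h ih => exact .tail ih (Or.inl ⟨h, rfl⟩)
  refine Relation.ReflTransGen.trans h3 ?_
  clear h3 h1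
  induction h2 with
  | refl => exact .refl
  | tail _ h ih => exact .tail ih (Or.inr ⟨h, rfl⟩)

theorem eps_fst {s : LTS Qs Lab} {e : LTS Qe Lab} {p p' : Qs × Qe}
    (h : (par s e).Eps p p') : s.Eps p.1 p'.1 := by
  induction h with
  | refl => exact .refl
  | tail _ h ih =>
    rcases h with ⟨h, _⟩ | ⟨_, h⟩
    · exact .tail ih h
    · rw [h]; exact ih

theorem projD_snoc_pos {σ : List (ELabel Lab)} {x : ELabel Lab} {Ls : Set Lab}
    (h : ELabel.inL Ls x) : projD (σ ++ [x]) Ls = projD σ Ls ++ [x] := by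
  simp [projD, h]

theorem projD_snoc_neg {σ : List (ELabel Lab)} {x : ELabel Lab} {Ls : Set Lab}
    (h : ¬ ELabel.inL Ls x) : projD (σ ++ [x]) Ls = projD σ Ls := by
  simp [projD, h]

theorem par_L {s : LTS Qs Lab} {e : LTS Qe Lab} {l : Lab} (h : l ∈ (par s e).L) :
    l ∈ s.L ∨ l ∈ e.L := by
  simp only [LTS.L, par, Set.mem_union, Set.mem_sdiff] at *
  tauto

theorem combine {s : LTS Qs Lab} {e : LTS Qe Lab} {a : Qs} {b : Qe}
    (σ : List (ELabel Lab)) : ∀ {a' : Qs} {b' : Qe}, TraceIn (par s e).L σ →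
    s.W a (projD σ s.L) a' → e.W b (projD σ e.L) b' →
    (par s e).W (a, b) σ (a', b') := by
  induction σ using List.reverseRecOn with
  | nil =>
    intro a' b' _ h1 h2
    exact .nil (eps_par (W_nil h1) (W_nil h2))
  | append_singleton σ x ih =>
    intro a' b' hσ h1 h2
    have hσ' : TraceIn (par s e).L σ := fun y hy => hσ y (by simp [hy])
    have hx := hσ x (by simp)
    cases x with
    | delta =>
      rw [projD_snoc_pos (x := .delta) (by trivial)] at h1 h2
      obtain ⟨a1, a2, ha, ⟨rfl, qa⟩, ea⟩ := W_snoc h1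
      obtain ⟨b1, b2, hb, ⟨rfl, qb⟩, eb⟩ := W_snoc h2
      refine .snoc (ih hσ' ha hb) (q2 := (a2, b2)) ⟨rfl, ?_, ?_⟩ (eps_par ea eb)
      · rintro l hl q' (⟨h, h', t, _⟩ | ⟨h, h', t, _⟩ | ⟨_, _, t, t'⟩)
        · rcases hl with hl | hl
          · exact qa.1 l hl _ t
          · exact h' (Or.inr hl)
        · rcases hl with hl | hl
          · exact h' (Or.inr hl)
          · exact qb.1 l hl _ t
        · rcases hl with hl | hl
          · exact qa.1 l hl _ t
          · exact qb.1 l hl _ t'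
      · rintro q' (⟨t, _⟩ | ⟨t, _⟩)
        · exact qa.2 _ t
        · exact qb.2 _ t
    | lab l =>
      by_cases ms : l ∈ s.L
      · rw [projD_snoc_pos (x := .lab l) ms] at h1
        obtain ⟨a1, a2, ha, ta, ea⟩ := W_snoc h1
        by_cases me : l ∈ e.L
        · rw [projD_snoc_pos (x := .lab l) me] at h2
          obtain ⟨b1, b2, hb, tb, eb⟩ := W_snoc h2
          exact .snoc (ih hσ' ha hb) (q2 := (a2, b2))
            (Or.inr (Or.inr ⟨ms, me, ta, tb⟩)) (eps_par ea eb)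
        · rw [projD_snoc_neg (x := .lab l) me] at h2
          exact .snoc (ih hσ' ha h2) (q2 := (a2, b'))
            (Or.inl ⟨ms, me, ta, rfl⟩) (eps_par ea .refl)
      · have me := (par_L hx).resolve_left ms
        rw [projD_snoc_neg (x := .lab l) ms] at h1
        rw [projD_snoc_pos (x := .lab l) me] at h2
        obtain ⟨b1, b2, hb, tb, eb⟩ := W_snoc h2
        exact .snoc (ih hσ' h1 hb) (q2 := (a', b2))
          (Or.inr (Or.inl ⟨me, ms, tb, rfl⟩)) (eps_par .refl eb)

theorem proj_fst {s : LTS Qs Lab} {e : LTS Qe Lab} (hen : e.InputEnabled)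
    (hcomp : Composable s e) {p p' : Qs × Qe} {σ : List (ELabel Lab)}
    (h : (par s e).W p σ p') : s.W p.1 (projD σ s.L) p'.1 := by
  induction h with
  | nil h => exact .nil (eps_fst h)
  | @snoc q1 q2 q' σ x h1 h2 h3 ih =>
    rename_i q2'
    cases x with
    | delta =>
      obtain ⟨rfl, hq⟩ := h2
      rw [projD_snoc_pos (x := .delta) (by trivial)]
      refine .snoc ih ⟨rfl, ?_, ?_⟩ (eps_fst h3)
      · intro l hl a t
        by_cases me : l ∈ e.L
        · have hI : l ∈ e.I := by
            rcases me with me | me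
            · exact me
            · have : l ∈ s.U ∩ e.U := ⟨hl, me⟩
              rw [hcomp] at this
              exact this.elim
          obtain ⟨b, hb⟩ := hen q2.2 l hI
          obtain ⟨b1, b2, hb1, tb, _⟩ := W_snoc (σ := []) hb
          have : b1 = q2.2 := by
            rcases Relation.ReflTransGen.cases_head (W_nil hb1) with h | ⟨c, hc, _⟩
            · exact h.symm
            · exact (hq.2 (q2.1, c) (Or.inr ⟨hc, rfl⟩)).elim
          subst this
          exact hq.1 l (Or.inl hl) (a, b2) (Or.inr (Or.inr ⟨Or.inr hl, me, t, tb⟩))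
        · exact hq.1 l (Or.inl hl) (a, q2.2) (Or.inl ⟨Or.inr hl, me, t, rfl⟩)
      · intro a t
        exact hq.2 (a, q2.2) (Or.inl ⟨t, rfl⟩)
    | lab l =>
      rcases h2 with ⟨h, h', t, _⟩ | ⟨h, h', t, t'⟩ | ⟨h, h', t, _⟩
      · rw [projD_snoc_pos (x := .lab l) h]
        exact .snoc ih t (eps_fst h3)
      · rw [projD_snoc_neg (x := .lab l) h']
        exact W_eps ih (t' ▸ eps_fst h3)
      · rw [projD_snoc_pos (x := .lab l) h]
        exact .snoc ih t (eps_fst h3)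

end CUI

/-- for composable `s` and input-enabled `i_e`, if
`σ↾L_s^δ ∈ Utraces(s)` and `σ↾L_{i_e}^δ ∈ Utraces(i_e)` then
`σ ∈ Utraces(s ∥ i_e)`. -/
theorem combine_utrace_imp {Qs Qie Lab : Type}
    (s : LTS Qs Lab) (iE : LTS Qie Lab)
    (hs : s.WellFormed) (hiE : iE.WellFormed)
    (hiEenabled : iE.InputEnabled)
    (hcomp : Composable s iE)
    (σ : List (ELabel Lab)) (hσ : TraceIn (par s iE).L σ)
    (h1 : projD σ s.L ∈ s.Utraces) (h2 : projD σ iE.L ∈ iE.Utraces) :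
    σ ∈ (par s iE).Utraces := by
  refine ⟨hσ, ?_, ?_⟩
  · obtain ⟨a, ha⟩ := h1.2.1
    obtain ⟨b, hb⟩ := h2.2.1
    exact ⟨(a, b), CUI.combine σ hσ ha hb⟩
  · rintro σ1 l σ2 rfl hl ⟨a, b⟩ hW
    have hsW : s.W s.q0 (projD σ1 s.L) a := CUI.proj_fst hiEenabled hcomp hW
    have hA : ∃ a', s.W a (projD [ELabel.lab l] s.L) a' := by
      by_cases ms : l ∈ s.L
      · have hI : l ∈ s.I := by
          simp only [LTS.L, par, Set.mem_union, Set.mem_sdiff] at hl ms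
          tauto
        have e1 : projD [ELabel.lab l] s.L = [ELabel.lab l] := by
          simp [projD, ELabel.inL, ms]
        rw [e1]
        exact h1.2.2 (projD σ1 s.L) l (projD σ2 s.L)
          (by simp [projD, ELabel.inL, ms]) hI a hsW
      · have e1 : projD [ELabel.lab l] s.L = [] := by
          simp [projD, ELabel.inL, ms]
        rw [e1]
        exact ⟨a, .nil .refl⟩
    have hB : ∃ b', iE.W b (projD [ELabel.lab l] iE.L) b' := by
      by_cases me : l ∈ iE.L
      · have hI : l ∈ iE.I := by
          simp only [LTS.L, par, Set.mem_union, Set.mem_sdiff] at hl me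
          tauto
        have e1 : projD [ELabel.lab l] iE.L = [ELabel.lab l] := by
          simp [projD, ELabel.inL, me]
        rw [e1]
        exact hiEenabled b l hI
      · have e1 : projD [ELabel.lab l] iE.L = [] := by
          simp [projD, ELabel.inL, me]
        rw [e1]
        exact ⟨b, .nil .refl⟩
    obtain ⟨a', ha⟩ := hA
    obtain ⟨b', hb⟩ := hB
    refine ⟨(a', b'), CUI.combine _ ?_ ha hb⟩
    intro x hx
    exact hσ x (by simp at hx; simp [hx])
end
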